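/- Let a, b, c, d ∈ ℝ³. The convex hull of the six edge midpoints (a+b)/2, (a+c)/2, (a+d)/2, (b+c)/2, (b+d)/2, (c+d)/2 has Lebesgue volume equal to 1/2 of the volume of the convex hull of {a, b, c, d}. -/

import Mathlib

open MeasureTheory

/-!
Let `p` be the vertices of an `n`-simplex with barycentric coordinates `xᵢ`. The homothety with
centre `pᵢ` and ratio `1/2` maps the simplex onto its corner `{1/2 ≤ xᵢ}`, of volume `2⁻ⁿ` times
that of the simplex. What is left, `{∀ i, xᵢ ≤ 1/2}`, is the hull of the edge midpoints: no
hyperplane separates a point of it from them, since on it a linear functional is largest at the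
midpoint of the two vertices with the largest values. The `n + 1` corners and this middle part
overlap only in hyperplanes `{xᵢ = 1/2}`, so the middle part has `1 - (n + 1) / 2ⁿ` of the volume,
which for `n = 3` is one half.
-/

section Hull

open Set

variable {ι E : Type*} [AddCommGroup E] [Module ℝ E]

/-- The midpoints of the edges of the (possibly degenerate) simplex with vertices `p i`; an edge is
a pair of distinct indices, so it is a single point when its two vertices coincide. -/
def edgeMidpoints (p : ι → E) : Set E :=
  {x | ∃ i j, i ≠ j ∧ midpoint ℝ (p i) (p j) = x}

/-- The corner at the vertex `p i` of the (possibly degenerate) simplex with vertices `p`, cut off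
by midpoint refinement: the simplex scaled by `1/2` about `p i`. -/
def cornerSimplex (p : ι → E) (i : ι) : Set E :=
  AffineMap.homothety (p i) (1 / 2 : ℝ) '' convexHull ℝ (range p)

theorem midpoint_mem_edgeMidpoints (p : ι → E) {i j : ι} (hij : i ≠ j) :
    midpoint ℝ (p i) (p j) ∈ edgeMidpoints p :=
  ⟨i, j, hij, rfl⟩

theorem finite_edgeMidpoints [Finite ι] (p : ι → E) : (edgeMidpoints p).Finite := by
  refine (finite_range fun ij : ι × ι => midpoint ℝ (p ij.1) (p ij.2)).subset ?_
  rintro _ ⟨i, j, -, rfl⟩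
  exact mem_range_self (i, j)

theorem edgeMidpoints_four (a b c d : E) :
    edgeMidpoints ![a, b, c, d] =
      {midpoint ℝ a b, midpoint ℝ a c, midpoint ℝ a d,
        midpoint ℝ b c, midpoint ℝ b d, midpoint ℝ c d} := by
  refine Subset.antisymm ?_ ?_
  · rintro _ ⟨i, j, hij, rfl⟩
    fin_cases i <;> fin_cases j <;> first | exact absurd rfl hij | simp [midpoint_comm]
  · have hmem {i j : Fin 4} (hij : i ≠ j) := midpoint_mem_edgeMidpoints ![a, b, c, d] hij
    rintro _ (rfl | rfl | rfl | rfl | rfl | rfl)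
    exacts [hmem (i := 0) (j := 1) (by decide), hmem (i := 0) (j := 2) (by decide),
      hmem (i := 0) (j := 3) (by decide), hmem (i := 1) (j := 2) (by decide),
      hmem (i := 1) (j := 3) (by decide), hmem (i := 2) (j := 3) (by decide)]

theorem convexHull_edgeMidpoints_subset (p : ι → E) :
    convexHull ℝ (edgeMidpoints p) ⊆ convexHull ℝ (range p) := by
  refine convexHull_min ?_ (convex_convexHull ℝ _)
  rintro _ ⟨i, j, -, rfl⟩
  exact (convex_convexHull ℝ _).midpoint_mem
    (subset_convexHull ℝ _ (mem_range_self i)) (subset_convexHull ℝ _ (mem_range_self j))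

theorem cornerSimplex_subset (p : ι → E) (i : ι) : cornerSimplex p i ⊆ convexHull ℝ (range p) := by
  rintro _ ⟨x, hx, rfl⟩
  rw [AffineMap.homothety_eq_lineMap]
  exact (convex_convexHull ℝ _).lineMap_mem
    (subset_convexHull ℝ _ (mem_range_self i)) hx (by norm_num)

theorem isCompact_cornerSimplex [TopologicalSpace E] [IsTopologicalAddGroup E]
    [ContinuousSMul ℝ E] [Finite ι] (p : ι → E) (i : ι) : IsCompact (cornerSimplex p i) :=
  ((finite_range p).isCompact_convexHull ℝ).image (AffineMap.homothety_continuous _ _)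

theorem sum_mul_le_half_add_of_le [Fintype ι] {w g : ι → ℝ} {i j : ι} (hw : ∀ k, 0 ≤ w k)
    (hwi : w i ≤ 1 / 2) (hsum : ∑ k, w k = 1) (hji : g j ≤ g i) (hj : ∀ k ≠ i, g k ≤ g j) :
    ∑ k, w k * g k ≤ (g i + g j) / 2 := by
  classical
  have hrest : ∑ k ∈ {i}ᶜ, w k * g k ≤ (∑ k ∈ {i}ᶜ, w k) * g j := by
    rw [Finset.sum_mul]
    refine Finset.sum_le_sum fun k hk => mul_le_mul_of_nonneg_left (hj k ?_) (hw k)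
    simpa using hk
  rw [Fintype.sum_eq_add_sum_compl i] at hsum ⊢
  calc w i * g i + ∑ k ∈ {i}ᶜ, w k * g k
      ≤ w i * g i + (1 - w i) * g j := by rwa [← hsum, add_sub_cancel_left, add_le_add_iff_left]
    _ = g j + w i * (g i - g j) := by ring
    _ ≤ g j + 1 / 2 * (g i - g j) := by gcongr
    _ = (g i + g j) / 2 := by ring

theorem exists_ne_sum_mul_le_half_add [Fintype ι] {w : ι → ℝ} (hw : ∀ k, 0 ≤ w k)
    (hw' : ∀ k, w k ≤ 1 / 2) (hsum : ∑ k, w k = 1) (g : ι → ℝ) :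
    ∃ i j, i ≠ j ∧ ∑ k, w k * g k ≤ (g i + g j) / 2 := by
  classical
  have hne : Nonempty ι := by
    by_contra h
    simp [not_nonempty_iff.1 h] at hsum
  obtain ⟨i, hi⟩ := Finite.exists_max g
  have hcompl : ({i}ᶜ : Finset ι).Nonempty := by
    by_contra h
    rw [Fintype.sum_eq_add_sum_compl i, Finset.not_nonempty_iff_eq_empty.1 h,
      Finset.sum_empty] at hsum
    linarith [hw' i]
  obtain ⟨j, hji, hj⟩ := Finset.exists_max_image _ g hcompl
  simp only [Finset.mem_compl, Finset.mem_singleton] at hji hj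
  exact ⟨i, j, Ne.symm hji, sum_mul_le_half_add_of_le hw (hw' i) hsum (hi j) hj⟩

theorem sum_smul_mem_convexHull_edgeMidpoints [TopologicalSpace E] [IsTopologicalAddGroup E]
    [ContinuousSMul ℝ E] [LocallyConvexSpace ℝ E] [T2Space E] [Fintype ι] (p : ι → E) {w : ι → ℝ}
    (hw : ∀ k, 0 ≤ w k) (hw' : ∀ k, w k ≤ 1 / 2) (hsum : ∑ k, w k = 1) :
    ∑ k, w k • p k ∈ convexHull ℝ (edgeMidpoints p) := by
  by_contra hnot
  obtain ⟨f, u, hf, hu⟩ := geometric_hahn_banach_closed_point (convex_convexHull ℝ _)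
    ((finite_edgeMidpoints p).isClosed_convexHull ℝ) hnot
  obtain ⟨i, j, hij, hle⟩ := exists_ne_sum_mul_le_half_add hw hw' hsum fun k => f (p k)
  have hmid : f (midpoint ℝ (p i) (p j)) = (f (p i) + f (p j)) / 2 := by
    simp only [midpoint_eq_smul_add, invOf_eq_inv, map_smul, map_add, smul_eq_mul]
    ring
  have hlt := hf _ (subset_convexHull ℝ _ (midpoint_mem_edgeMidpoints p hij))
  simp only [map_sum, map_smul, smul_eq_mul] at hu
  linarith

end Hull

section Coordinates

open Set

variable {ι E : Type*} [AddCommGroup E] [Module ℝ E] (b : AffineBasis ι ℝ E)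

theorem coord_le_half_of_mem_convexHull_edgeMidpoints {x : E}
    (hx : x ∈ convexHull ℝ (edgeMidpoints b)) (i : ι) : b.coord i x ≤ 1 / 2 := by
  classical
  have hconvex : Convex ℝ (b.coord i ⁻¹' Iic (1 / 2)) := (convex_Iic _).affine_preimage _
  refine convexHull_min ?_ hconvex hx
  rintro _ ⟨j, k, hjk, rfl⟩
  rw [mem_preimage, mem_Iic, AffineMap.map_midpoint, b.coord_apply, b.coord_apply,
    midpoint_eq_smul_add]
  split_ifs with hj hk
  · exact absurd (hj.symm.trans hk) hjk
  all_goals norm_num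

theorem half_le_coord_of_mem_cornerSimplex {i : ι} {x : E} (hx : x ∈ cornerSimplex b i) :
    1 / 2 ≤ b.coord i x := by
  obtain ⟨y, hy, rfl⟩ := hx
  rw [b.convexHull_eq_nonneg_coord] at hy
  rw [AffineMap.homothety_eq_lineMap, AffineMap.apply_lineMap, b.coord_apply_eq,
    AffineMap.lineMap_apply_module]
  simp only [smul_eq_mul]
  linarith [hy i]

theorem mem_cornerSimplex_of_half_le_coord {i : ι} {x : E} (hx : x ∈ convexHull ℝ (range b))
    (hi : 1 / 2 ≤ b.coord i x) : x ∈ cornerSimplex b i := by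
  refine ⟨AffineMap.homothety (b i) (2 : ℝ) x, ?_, ?_⟩
  · rw [b.convexHull_eq_nonneg_coord] at hx ⊢
    intro j
    rw [AffineMap.homothety_eq_lineMap, AffineMap.apply_lineMap, AffineMap.lineMap_apply_module]
    rcases eq_or_ne j i with rfl | hji
    · rw [b.coord_apply_eq]
      simp only [smul_eq_mul]
      linarith
    · rw [b.coord_apply_ne hji]
      simpa using hx j
  · rw [← AffineMap.homothety_mul_apply]
    norm_num

theorem convexHull_range_eq_union [TopologicalSpace E] [IsTopologicalAddGroup E]
    [ContinuousSMul ℝ E] [LocallyConvexSpace ℝ E] [T2Space E] [Finite ι] :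
    convexHull ℝ (range b) = convexHull ℝ (edgeMidpoints b) ∪ ⋃ i, cornerSimplex b i := by
  have := Fintype.ofFinite ι
  refine Subset.antisymm (fun x hx => ?_)
    (union_subset (convexHull_edgeMidpoints_subset b) (iUnion_subset (cornerSimplex_subset b)))
  by_cases h : ∃ i, 1 / 2 ≤ b.coord i x
  · obtain ⟨i, hi⟩ := h
    exact Or.inr (mem_iUnion.2 ⟨i, mem_cornerSimplex_of_half_le_coord b hx hi⟩)
  · push Not at h
    rw [b.convexHull_eq_nonneg_coord] at hx
    rw [← b.linear_combination_coord_eq_self x]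
    exact Or.inl (sum_smul_mem_convexHull_edgeMidpoints b hx (fun i => (h i).le)
      (b.sum_coord_apply_eq_one x))

theorem cornerSimplex_inter_subset [Finite ι] {i j : ι} (hij : i ≠ j) :
    cornerSimplex b i ∩ cornerSimplex b j ⊆ b.coord i ⁻¹' {1 / 2} := by
  have := Fintype.ofFinite ι
  rintro x ⟨hxi, hxj⟩
  have hnonneg : ∀ k, 0 ≤ b.coord k x := by
    have hx := cornerSimplex_subset b i hxi
    rwa [b.convexHull_eq_nonneg_coord] at hx
  have hpair : b.coord i x + b.coord j x ≤ 1 := by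
    rw [← b.sum_coord_apply_eq_one x]
    exact Finset.add_le_sum (fun k _ => hnonneg k) (Finset.mem_univ i) (Finset.mem_univ j) hij
  have hi := half_le_coord_of_mem_cornerSimplex b hxi
  have hj := half_le_coord_of_mem_cornerSimplex b hxj
  exact le_antisymm (by linarith) hi

theorem convexHull_edgeMidpoints_inter_cornerSimplex_subset (i : ι) :
    convexHull ℝ (edgeMidpoints b) ∩ cornerSimplex b i ⊆ b.coord i ⁻¹' {1 / 2} := fun _ hx =>
  le_antisymm (coord_le_half_of_mem_convexHull_edgeMidpoints b hx.1 i)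
    (half_le_coord_of_mem_cornerSimplex b hx.2)

end Coordinates

section Volume

open Set Module Function
open scoped ENNReal

variable {ι E : Type*} [NormedAddCommGroup E] [NormedSpace ℝ E] [FiniteDimensional ℝ E]
  [MeasurableSpace E] [BorelSpace E] (μ : Measure E) [μ.IsAddHaarMeasure]

theorem addHaar_convexHull_eq_zero {s : Set E} (hs : affineSpan ℝ s ≠ ⊤) :
    μ (convexHull ℝ s) = 0 :=
  measure_mono_null (convexHull_subset_affineSpan s) (μ.addHaar_affineSubspace _ hs)

theorem addHaar_affineMap_preimage_singleton {F : Type*} [AddCommGroup F] [Module ℝ F]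
    (f : E →ᵃ[ℝ] F) {c : F} {x : E} (hx : f x ≠ c) : μ (f ⁻¹' {c}) = 0 := by
  have hspan : (AffineSubspace.mk' c ⊥).comap f ≠ ⊤ := by
    intro htop
    have hmem : x ∈ (AffineSubspace.mk' c ⊥).comap f := htop ▸ AffineSubspace.mem_top ℝ E x
    exact hx (by simpa [AffineSubspace.mem_mk', sub_eq_zero] using hmem)
  convert μ.addHaar_affineSubspace _ hspan
  ext y
  simp [AffineSubspace.mem_mk', sub_eq_zero]

theorem addHaar_coord_preimage_half (b : AffineBasis ι ℝ E) (i : ι) :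
    μ (b.coord i ⁻¹' {1 / 2}) = 0 :=
  addHaar_affineMap_preimage_singleton μ (b.coord i) (x := b i) (by norm_num)

theorem addHaar_cornerSimplex (p : ι → E) (i : ι) :
    μ (cornerSimplex p i) = μ (convexHull ℝ (range p)) / 2 ^ finrank ℝ E := by
  rw [cornerSimplex, μ.addHaar_image_homothety, abs_of_nonneg (by positivity),
    ENNReal.ofReal_pow (by norm_num), one_div, ENNReal.ofReal_inv_of_pos two_pos,
    ENNReal.ofReal_ofNat, ← ENNReal.inv_pow, ENNReal.div_eq_inv_mul]

theorem addHaar_convexHull_edgeMidpoints_add [Fintype ι] (b : AffineBasis ι ℝ E) :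
    μ (convexHull ℝ (edgeMidpoints b)) +
      Fintype.card ι * (μ (convexHull ℝ (range b)) / 2 ^ finrank ℝ E) =
        μ (convexHull ℝ (range b)) := by
  have hmeas (i : ι) : NullMeasurableSet (cornerSimplex b i) μ :=
    (isCompact_cornerSimplex b i).measurableSet.nullMeasurableSet
  have hcorners : Pairwise (AEDisjoint μ on cornerSimplex b) := fun i j hij =>
    measure_mono_null (cornerSimplex_inter_subset b hij) (addHaar_coord_preimage_half μ b i)
  have hmiddle : AEDisjoint μ (convexHull ℝ (edgeMidpoints b)) (⋃ i, cornerSimplex b i) :=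
    AEDisjoint.iUnion_right_iff.2 fun i => measure_mono_null
      (convexHull_edgeMidpoints_inter_cornerSimplex_subset b i) (addHaar_coord_preimage_half μ b i)
  conv_rhs => rw [convexHull_range_eq_union b, measure_union₀ (.iUnion hmeas) hmiddle,
    measure_iUnion₀ hcorners hmeas]
  simp only [addHaar_cornerSimplex, tsum_fintype, Finset.sum_const, Finset.card_univ, nsmul_eq_mul]

/-- The subtraction is never truncated, since `n + 1 ≤ 2 ^ n` for `n = finrank ℝ E`. -/
theorem stmt_9_general [Fintype ι] (p : ι → E) (hcard : Fintype.card ι = finrank ℝ E + 1) :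
    μ (convexHull ℝ (edgeMidpoints p)) =
      (1 - Fintype.card ι / 2 ^ finrank ℝ E) * μ (convexHull ℝ (range p)) := by
  by_cases hspan : affineSpan ℝ (range p) = ⊤
  · have hind : AffineIndependent ℝ p := by
      rw [affineIndependent_iff_finrank_vectorSpan_eq ℝ p hcard,
        ← direction_affineSpan, hspan, AffineSubspace.direction_top, finrank_top]
    have hfin : μ (convexHull ℝ (range p)) ≠ ∞ :=
      ((finite_range p).isCompact_convexHull ℝ).measure_ne_top
    rw [ENNReal.sub_mul fun _ _ => hfin, one_mul, ENNReal.mul_comm_div]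
    refine ENNReal.eq_sub_of_add_eq ?_ (addHaar_convexHull_edgeMidpoints_add μ ⟨p, hind, hspan⟩)
    finiteness
  · have hzero := addHaar_convexHull_eq_zero μ hspan
    rw [hzero, mul_zero, measure_mono_null (convexHull_edgeMidpoints_subset p) hzero]

theorem addHaar_convexHull_edgeMidpoints_of_finrank_eq_three (hE : finrank ℝ E = 3)
    (p : Fin 4 → E) :
    μ (convexHull ℝ (edgeMidpoints p)) = μ (convexHull ℝ (range p)) / 2 := by
  have hcorners : (4 / 2 ^ 3 : ℝ≥0∞) = 2⁻¹ := by
    rw [← ENNReal.toReal_eq_toReal_iff' (by finiteness) (by finiteness)]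
    norm_num
  rw [stmt_9_general μ p (by simp [hE]), hE, Fintype.card_fin, Nat.cast_ofNat, hcorners,
    ENNReal.one_sub_inv_two, ENNReal.div_eq_inv_mul]

end Volume

/-- The central octahedron produced by midpoint refinement, namely the convex hull of the
six edge midpoints of the tetrahedron with vertices `a, b, c, d`, has Lebesgue volume equal
to `1/2` of the volume of the tetrahedron `conv {a, b, c, d}`. -/
theorem stmt_9 (a b c d : EuclideanSpace ℝ (Fin 3)) :
    volume (convexHull ℝ ({midpoint ℝ a b, midpoint ℝ a c, midpoint ℝ a d,
        midpoint ℝ b c, midpoint ℝ b d, midpoint ℝ c d} : Set (EuclideanSpace ℝ (Fin 3))))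
      = volume (convexHull ℝ ({a, b, c, d} : Set (EuclideanSpace ℝ (Fin 3)))) / 2 := by
  have hrange : Set.range ![a, b, c, d] = {a, b, c, d} := by
    simp only [Matrix.range_cons, Matrix.range_empty, Set.union_empty, Set.singleton_union]
  rw [← edgeMidpoints_four, ← hrange]
  exact addHaar_convexHull_edgeMidpoints_of_finrank_eq_three volume finrank_euclideanSpace_fin _
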